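/- arXiv:1206.4586 — 2 statements merged into one kernel-verified Lean document; each statement's English description precedes it below -/
import Mathlib

section
/- Let G_n, n ≥ 2, be the random graphs of Construction 1 built from distributions ν_n, with D_n = |S_n|, and suppose D_n/n converges in distribution to a probability measure ν on [0,1] as n → ∞. Let F be a finite simple graph on {1,…,m} and σ a permutation of {1,…,m}, with indegrees d_j = d_j(F_σ). Then E[n_≤(F_σ, G_n)] / n^m → (1/m!) ∏_{j=1}^m M_{d_j} as n → ∞, where M_d = ∫₀¹ x^d dν(x). -/
open MeasureTheory Filter
open scoped ENNReal

instance (n : ℕ) : MeasurableSpace (Finset (Fin n)) := ⊤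

/-- The law of the random neighbourhood set `S_v ⊆ {i : i < v}` of vertex `v` in
Construction 1: `P(S_v = A) = q_v(|A|) / C(v, |A|)` for `A ⊆ {i : i < v}` (`v` has `v`
predecessors since vertices are 0-indexed; `q v` is the indegree distribution of `v`,
supported on `{0,…,v}`). -/
noncomputable def nbhdMeasure (n : ℕ) (q : ℕ → ℕ → ℝ≥0∞) (v : Fin n) :
    Measure (Finset (Fin n)) :=
  ∑ A : Finset (Fin n),
    (if A ⊆ Finset.Iio v then q v A.card / ((v : ℕ).choose A.card : ℝ≥0∞) else 0) •
      Measure.dirac A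

/-- The joint law of the independent random sets `S_v`, `v` a vertex of `G_n`. -/
noncomputable def con1Measure (n : ℕ) (q : ℕ → ℕ → ℝ≥0∞) :
    Measure (Fin n → Finset (Fin n)) :=
  Measure.pi fun v => nbhdMeasure n q v

/-- The graph `G_n` of Construction 1: for `i < k`, the edge `{i,k}` is present
iff `i ∈ S_k`. -/
def graphOf {n : ℕ} (ω : Fin n → Finset (Fin n)) : SimpleGraph (Fin n) where
  Adj i j := (i < j ∧ i ∈ ω j) ∨ (j < i ∧ j ∈ ω i)
  symm := ⟨fun _ _ h => h.symm⟩
  loopless := ⟨fun i h => by rcases h with ⟨h, -⟩ | ⟨h, -⟩ <;> exact absurd h (lt_irrefl i)⟩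

/-- `F_σ`: the graph `F` with vertices relabelled by `i ↦ σ i`. -/
def relabel {m : ℕ} (σ : Equiv.Perm (Fin m)) (F : SimpleGraph (Fin m)) : SimpleGraph (Fin m) where
  Adj i j := F.Adj (σ.symm i) (σ.symm j)
  symm := ⟨fun _ _ h => F.symm.symm _ _ h⟩
  loopless := ⟨fun _ h => F.loopless.irrefl _ h⟩

/-- `d_j(F) = #{i < j : {i,j} ∈ E(F)}`, the indegree of `j` when edges are directed
towards the larger endpoint. -/
noncomputable def indeg {m : ℕ} (F : SimpleGraph (Fin m)) (j : Fin m) : ℕ :=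
  Nat.card {i : Fin m // i < j ∧ F.Adj i j}

/-- `n_≤(F,G)`: the number of strictly increasing homomorphisms `F → G`. -/
noncomputable def incHomCount {m n : ℕ} (F : SimpleGraph (Fin m)) (G : SimpleGraph (Fin n)) : ℕ :=
  Nat.card {φ : Fin m → Fin n // StrictMono φ ∧ ∀ i j, F.Adj i j → G.Adj (φ i) (φ j)}

open scoped Classical in
/-- The strictly increasing maps `{1,…,m} → {1,…,n}`. -/
noncomputable def incMaps (m n : ℕ) : Finset (Fin m → Fin n) :=
  Finset.univ.filter StrictMono


/-! A strictly increasing map `φ` is a homomorphism `F → G_n` exactly when, for each `j`, the random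
set at `φ j` contains the `d_j` images of the earlier neighbours of `j`. These events are
independent, and since each random set is uniform given its size `D`, the `j`-th one has
probability `E[C(D, d_j)] / C(φ j, d_j)`. This tends to `M_{d_j}` as `φ j → ∞`, because
`C(e, d) / C(v, d) - (e / (v + 1)) ^ d → 0` uniformly in `e ≤ v`. Averaging over the `C(n, m)`
increasing maps, the product of the probabilities may be replaced by the product of their limits:
bounding the difference by a sum over all `n ^ m` maps makes it factorize into Cesàro means. -/

section ProductEstimates

variable {ι : Type*}

lemma norm_prod_sub_prod_le {R : Type*} [NormedCommRing R] [NormOneClass R] (s : Finset ι)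
    {a b : ι → R} {B δ : ι → ℝ} (hb : ∀ i ∈ s, ‖b i‖ ≤ B i) (hab : ∀ i ∈ s, ‖a i - b i‖ ≤ δ i) :
    ‖∏ i ∈ s, a i - ∏ i ∈ s, b i‖ ≤ ∏ i ∈ s, (B i + δ i) - ∏ i ∈ s, B i := by
  classical
  induction s using Finset.induction_on with
  | empty => simp
  | insert i s hi ih =>
    obtain ⟨hbi, hbs⟩ := Finset.forall_mem_insert .. |>.1 hb
    obtain ⟨habi, habs⟩ := Finset.forall_mem_insert .. |>.1 hab
    have ha_le : ‖a i‖ ≤ B i + δ i := by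
      linarith [norm_le_norm_add_norm_sub (b i) (a i), norm_sub_rev (b i) (a i)]
    have hb_prod : ‖∏ j ∈ s, b j‖ ≤ ∏ j ∈ s, B j :=
      (Finset.norm_prod_le s b).trans (Finset.prod_le_prod (fun _ _ ↦ norm_nonneg _) hbs)
    simp only [Finset.prod_insert hi]
    calc ‖a i * ∏ j ∈ s, a j - b i * ∏ j ∈ s, b j‖
        = ‖a i * (∏ j ∈ s, a j - ∏ j ∈ s, b j) + (a i - b i) * ∏ j ∈ s, b j‖ := by ring_nf
      _ ≤ ‖a i‖ * ‖∏ j ∈ s, a j - ∏ j ∈ s, b j‖ + ‖a i - b i‖ * ‖∏ j ∈ s, b j‖ :=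
          (norm_add_le _ _).trans (add_le_add (norm_mul_le _ _) (norm_mul_le _ _))
      _ ≤ (B i + δ i) * (∏ j ∈ s, (B j + δ j) - ∏ j ∈ s, B j) + δ i * ∏ j ∈ s, B j := by
          gcongr
          · exact (norm_nonneg _).trans ha_le
          · exact ih hbs habs
          · exact (norm_nonneg _).trans habi
      _ = (B i + δ i) * ∏ j ∈ s, (B j + δ j) - B i * ∏ j ∈ s, B j := by ring

variable [Fintype ι] {u : ι → ℕ → ℝ} {L : ι → ℝ}

-- The sum over all maps of the bound in `norm_prod_sub_prod_le` factorizes over the coordinates,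
-- and each factor is a Cesàro mean.
lemma tendsto_sum_abs_prod_sub_prod_div_pow [DecidableEq ι]
    (hu : ∀ j, Tendsto (u j) atTop (nhds (L j))) :
    Tendsto (fun n : ℕ ↦ (∑ φ : ι → Fin n, |∏ j, u j (φ j) - ∏ j, L j|) / (n : ℝ) ^ Fintype.card ι)
      atTop (nhds 0) := by
  have mean_tendsto (j : ι) : Tendsto (fun n : ℕ ↦
      (n : ℝ)⁻¹ * ∑ v ∈ Finset.range n, (|L j| + |u j v - L j|)) atTop (nhds |L j|) := by
    refine Filter.Tendsto.cesaro ?_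
    simpa using (((hu j).sub_const (L j)).abs).const_add |L j|
  have bound_tendsto : Tendsto (fun n : ℕ ↦
      (∏ j, (n : ℝ)⁻¹ * ∑ v ∈ Finset.range n, (|L j| + |u j v - L j|)) - ∏ j, |L j|)
      atTop (nhds 0) := by
    simpa using (tendsto_finsetProd Finset.univ fun j _ ↦ mean_tendsto j).sub_const (∏ j, |L j|)
  refine squeeze_zero' (Eventually.of_forall fun n ↦ by positivity) ?_ bound_tendsto
  filter_upwards [eventually_ne_atTop 0] with n hn
  have hpow : (n : ℝ) ^ Fintype.card ι ≠ 0 := pow_ne_zero _ (Nat.cast_ne_zero.2 hn)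
  have sum_prod_eq : ∑ φ : ι → Fin n, ∏ j, (|L j| + |u j (φ j) - L j|) =
      ∏ j, ∑ v ∈ Finset.range n, (|L j| + |u j v - L j|) := by
    simp only [Finset.sum_range]
    exact (Fintype.prod_sum fun j (v : Fin n) ↦ |L j| + |u j v - L j|).symm
  calc (∑ φ : ι → Fin n, |∏ j, u j (φ j) - ∏ j, L j|) / (n : ℝ) ^ Fintype.card ι
      ≤ (∑ φ : ι → Fin n, (∏ j, (|L j| + |u j (φ j) - L j|) - ∏ j, |L j|))
          / (n : ℝ) ^ Fintype.card ι := by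
        gcongr with φ
        exact norm_prod_sub_prod_le (R := ℝ) _ (fun _ _ ↦ le_rfl) fun _ _ ↦ le_rfl
    _ = (∏ j, (n : ℝ)⁻¹ * ∑ v ∈ Finset.range n, (|L j| + |u j v - L j|)) - ∏ j, |L j| := by
        rw [Finset.sum_sub_distrib, sum_prod_eq]
        simp only [Finset.prod_mul_distrib, Finset.prod_const, Finset.sum_const, Finset.card_univ,
          Fintype.card_fun, Fintype.card_fin, nsmul_eq_mul, Nat.cast_pow, inv_pow]
        rw [sub_div, mul_div_cancel_left₀ _ hpow, div_eq_inv_mul]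

lemma tendsto_sum_prod_div_pow {S : ∀ n : ℕ, Finset (ι → Fin n)} {c : ℝ}
    (hS : Tendsto (fun n ↦ ((S n).card : ℝ) / (n : ℝ) ^ Fintype.card ι) atTop (nhds c))
    (hu : ∀ j, Tendsto (u j) atTop (nhds (L j))) :
    Tendsto (fun n ↦ (∑ φ ∈ S n, ∏ j, u j (φ j)) / (n : ℝ) ^ Fintype.card ι) atTop
      (nhds (c * ∏ j, L j)) := by
  classical
  have diff_tendsto : Tendsto (fun n ↦ (∑ φ ∈ S n, (∏ j, u j (φ j) - ∏ j, L j))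
      / (n : ℝ) ^ Fintype.card ι) atTop (nhds 0) := by
    refine squeeze_zero_norm (fun n ↦ ?_) (tendsto_sum_abs_prod_sub_prod_div_pow hu)
    rw [norm_div, norm_pow, Real.norm_natCast]
    gcongr
    exact (Finset.abs_sum_le_sum_abs _ _).trans
      (Finset.sum_le_univ_sum_of_nonneg fun _ ↦ abs_nonneg _)
  have main_tendsto := hS.mul_const (∏ j, L j)
  refine (zero_add (c * ∏ j, L j) ▸ diff_tendsto.add main_tendsto).congr fun n ↦ ?_
  rw [Finset.sum_sub_distrib, Finset.sum_const, nsmul_eq_mul]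
  ring

end ProductEstimates

section IncreasingMaps

lemma card_incMaps (m n : ℕ) : (incMaps m n).card = n.choose m := by
  classical
  have strictMonoEquiv : {φ : Fin m → Fin n // StrictMono φ} ≃ (Fin m ↪o Fin n) :=
    { toFun := fun φ ↦ OrderEmbedding.ofStrictMono φ.1 φ.2
      invFun := fun f ↦ ⟨f, f.strictMono⟩ }
  rw [incMaps, ← Fintype.card_subtype, ← Nat.card_eq_fintype_card,
    Nat.card_congr (strictMonoEquiv.trans Set.powersetCard.ofFinEmbEquiv), Set.powersetCard.card,
    Nat.card_fin]

lemma tendsto_choose_div_pow (m : ℕ) :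
    Tendsto (fun n : ℕ ↦ (n.choose m : ℝ) / (n : ℝ) ^ m) atTop (nhds (1 / (m.factorial : ℝ))) := by
  refine ((isEquivalent_choose m).div
    (Asymptotics.IsEquivalent.refl (u := fun n : ℕ ↦ (n : ℝ) ^ m))).symm.tendsto_nhds ?_
  refine tendsto_const_nhds.congr' ?_
  filter_upwards [eventually_ne_atTop 0] with n hn
  have hn' : (n : ℝ) ^ m ≠ 0 := pow_ne_zero m (Nat.cast_ne_zero.2 hn)
  simp only [Pi.div_apply]
  field_simp

end IncreasingMaps

section InclusionProbability

/-- The probability that a fixed `d`-element subset of a `v`-element set is contained in a random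
subset that is uniform given its size, when the size `D` has probability mass function `p`. It is
written as `E[C(D, d)] / C(v, d)`. -/
noncomputable def inclusionProb (p : ℕ → ℝ) (d v : ℕ) : ℝ :=
  ∑ e ∈ Finset.range (v + 1), p e * ((e.choose d : ℝ) / (v.choose d : ℝ))

lemma cast_choose_div_cast_choose (d e v : ℕ) :
    (e.choose d : ℝ) / (v.choose d : ℝ) =
      ∏ i ∈ Finset.range d, ((e - i : ℕ) : ℝ) / ((v - i : ℕ) : ℝ) := by
  rw [Finset.prod_div_distrib, ← Nat.cast_prod, ← Nat.cast_prod, ← Nat.descFactorial_eq_prod_range,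
    ← Nat.descFactorial_eq_prod_range, Nat.descFactorial_eq_factorial_mul_choose,
    Nat.descFactorial_eq_factorial_mul_choose, Nat.cast_mul, Nat.cast_mul,
    mul_div_mul_left _ _ (Nat.cast_ne_zero.2 d.factorial_ne_zero)]

lemma abs_tsub_div_tsub_sub_div_succ_le {e v i : ℕ} (hev : e ≤ v) (hiv : i < v) :
    |((e - i : ℕ) : ℝ) / ((v - i : ℕ) : ℝ) - (e : ℝ) / ((v : ℝ) + 1)| ≤
      ((i : ℝ) + 1) / ((v : ℝ) - i) := by
  have hev' : (e : ℝ) ≤ v := Nat.cast_le.2 hev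
  have hvi : (0 : ℝ) < (v : ℝ) - i := sub_pos.2 (Nat.cast_lt.2 hiv)
  have hsub_le : ((e - i : ℕ) : ℝ) ≤ e := Nat.cast_le.2 (Nat.sub_le e i)
  have hle_sub : (e : ℝ) - i ≤ ((e - i : ℕ) : ℝ) := by
    rw [sub_le_iff_le_add]
    exact_mod_cast Nat.sub_le_iff_le_add.1 le_rfl
  have numerator_le :
      |((e - i : ℕ) : ℝ) * (v + 1) - (v - i) * e| ≤ ((i : ℝ) + 1) * (v + 1) := by
    rw [abs_le]
    have he : (0 : ℝ) ≤ e * (i + 1) := by positivity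
    have hi : (0 : ℝ) ≤ i * (v + 1) := by positivity
    constructor <;> nlinarith [he, hi, v.cast_nonneg (α := ℝ), i.cast_nonneg (α := ℝ)]
  rw [Nat.cast_sub hiv.le, div_sub_div _ _ hvi.ne' (by positivity), abs_div,
    abs_of_pos (a := ((v : ℝ) - i) * (v + 1)) (by positivity), div_le_div_iff₀ (by positivity) hvi]
  calc |((e - i : ℕ) : ℝ) * (v + 1) - (v - i) * e| * (v - i)
      ≤ ((i : ℝ) + 1) * (v + 1) * (v - i) := by gcongr
    _ = ((i : ℝ) + 1) * ((v - i) * (v + 1)) := by ring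

lemma abs_choose_div_choose_sub_pow_le {d e v : ℕ} (hev : e ≤ v) (hdv : d ≤ v) :
    |(e.choose d : ℝ) / (v.choose d : ℝ) - ((e : ℝ) / ((v : ℝ) + 1)) ^ d| ≤
      ∏ i ∈ Finset.range d, (1 + ((i : ℝ) + 1) / ((v : ℝ) - i)) - 1 := by
  have hdiv_le : ‖(e : ℝ) / ((v : ℝ) + 1)‖ ≤ 1 := by
    rw [Real.norm_of_nonneg (by positivity)]
    exact div_le_one_of_le₀ (by exact_mod_cast hev.trans v.le_succ) (by positivity)
  have hprod := norm_prod_sub_prod_le (Finset.range d)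
    (a := fun i ↦ ((e - i : ℕ) : ℝ) / ((v - i : ℕ) : ℝ)) (fun _ _ ↦ hdiv_le) fun i hi ↦
      abs_tsub_div_tsub_sub_div_succ_le hev ((Finset.mem_range.1 hi).trans_le hdv)
  simpa only [← cast_choose_div_cast_choose, Finset.prod_const, Finset.card_range, one_pow,
    Real.norm_eq_abs] using hprod

lemma abs_inclusionProb_sub_moment_le {p : ℕ → ℝ} {d v : ℕ} (hp0 : ∀ e, 0 ≤ p e)
    (hp1 : ∑ e ∈ Finset.range (v + 1), p e = 1) (hdv : d ≤ v) :
    |inclusionProb p d v - ∑ e ∈ Finset.range (v + 1), p e * ((e : ℝ) / ((v : ℝ) + 1)) ^ d| ≤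
      ∏ i ∈ Finset.range d, (1 + ((i : ℝ) + 1) / ((v : ℝ) - i)) - 1 := by
  rw [inclusionProb, ← Finset.sum_sub_distrib]
  refine (Finset.abs_sum_le_sum_abs _ _).trans ?_
  calc ∑ e ∈ Finset.range (v + 1), |p e * ((e.choose d : ℝ) / (v.choose d : ℝ)) -
        p e * ((e : ℝ) / ((v : ℝ) + 1)) ^ d|
      ≤ ∑ e ∈ Finset.range (v + 1),
          p e * (∏ i ∈ Finset.range d, (1 + ((i : ℝ) + 1) / ((v : ℝ) - i)) - 1) := by
        refine Finset.sum_le_sum fun e he ↦ ?_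
        rw [← mul_sub, abs_mul, abs_of_nonneg (hp0 e)]
        exact mul_le_mul_of_nonneg_left
          (abs_choose_div_choose_sub_pow_le (Finset.mem_range_succ_iff.1 he) hdv) (hp0 e)
    _ = ∏ i ∈ Finset.range d, (1 + ((i : ℝ) + 1) / ((v : ℝ) - i)) - 1 := by
        rw [← Finset.sum_mul, hp1, one_mul]

lemma tendsto_prod_one_add_div_sub (d : ℕ) :
    Tendsto (fun v : ℕ ↦ ∏ i ∈ Finset.range d, (1 + ((i : ℝ) + 1) / ((v : ℝ) - i))) atTop
      (nhds 1) := by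
  have factor_tendsto (i : ℕ) :
      Tendsto (fun v : ℕ ↦ 1 + ((i : ℝ) + 1) / ((v : ℝ) - i)) atTop (nhds 1) := by
    simpa [sub_eq_add_neg] using (tendsto_const_nhds.div_atTop
      (tendsto_atTop_add_const_right _ (-(i : ℝ)) tendsto_natCast_atTop_atTop)).const_add 1
  simpa using tendsto_finsetProd (Finset.range d) fun i _ ↦ factor_tendsto i

variable {p : ℕ → ℕ → ℝ} {ν : Measure ℝ} [IsProbabilityMeasure ν]

lemma tendsto_sum_mul_of_continuousOn_Icc (hν : ν (Set.Icc 0 1) = 1)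
    (hconv : ∀ f : BoundedContinuousFunction ℝ ℝ,
      Tendsto (fun k ↦ ∑ e ∈ Finset.range k, p (k - 1) e * f ((e : ℝ) / k))
        atTop (nhds (∫ x, f x ∂ν)))
    {g : ℝ → ℝ} (hg : ContinuousOn g (Set.Icc 0 1)) :
    Tendsto (fun v ↦ ∑ e ∈ Finset.range (v + 1), p v e * g ((e : ℝ) / ((v : ℝ) + 1)))
      atTop (nhds (∫ x, g x ∂ν)) := by
  obtain ⟨f, hf⟩ : ∃ f : BoundedContinuousFunction ℝ ℝ, Set.EqOn f g (Set.Icc 0 1) :=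
    ⟨(BoundedContinuousFunction.mkOfCompact ⟨_, hg.domRestrict⟩).compContinuous
      ⟨Set.projIcc 0 1 zero_le_one, continuous_projIcc⟩, fun x hx ↦ by
        simp [Set.projIcc_of_mem zero_le_one hx]⟩
  have hint : ∫ x, f x ∂ν = ∫ x, g x ∂ν :=
    integral_congr_ae (hf.eventuallyEq_of_mem ((mem_ae_iff_prob_eq_one measurableSet_Icc).2 hν))
  refine (hint ▸ (hconv f).comp (tendsto_add_atTop_nat 1)).congr fun v ↦
    Finset.sum_congr rfl fun e he ↦ ?_
  have hmem : (e : ℝ) / ((v : ℝ) + 1) ∈ Set.Icc (0 : ℝ) 1 :=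
    ⟨by positivity, div_le_one_of_le₀
      (by exact_mod_cast (Finset.mem_range.1 he).le) (by positivity)⟩
  rw [Nat.add_sub_cancel, Nat.cast_succ, hf hmem]

lemma tendsto_inclusionProb (hν : ν (Set.Icc 0 1) = 1) (hp0 : ∀ v e, 0 ≤ p v e)
    (hp1 : ∀ v, ∑ e ∈ Finset.range (v + 1), p v e = 1)
    (hconv : ∀ f : BoundedContinuousFunction ℝ ℝ,
      Tendsto (fun k ↦ ∑ e ∈ Finset.range k, p (k - 1) e * f ((e : ℝ) / k))
        atTop (nhds (∫ x, f x ∂ν))) (d : ℕ) :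
    Tendsto (fun v ↦ inclusionProb (p v) d v) atTop (nhds (∫ x, x ^ d ∂ν)) := by
  have error_tendsto : Tendsto (fun v : ℕ ↦ inclusionProb (p v) d v -
      ∑ e ∈ Finset.range (v + 1), p v e * ((e : ℝ) / ((v : ℝ) + 1)) ^ d) atTop (nhds 0) := by
    refine squeeze_zero_norm' ?_ (sub_self (1 : ℝ) ▸ (tendsto_prod_one_add_div_sub d).sub_const 1)
    filter_upwards [eventually_ge_atTop d] with v hv
    exact abs_inclusionProb_sub_moment_le (hp0 v) (hp1 v) hv
  simpa using error_tendsto.add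
    (tendsto_sum_mul_of_continuousOn_Icc hν hconv (continuous_pow d).continuousOn)

end InclusionProbability

section NeighborhoodLaw

lemma sum_Icc_finset_apply_card {α M : Type*} [DecidableEq α] [AddCommMonoid M] {B T : Finset α}
    (hBT : B ⊆ T) (f : ℕ → M) :
    ∑ A ∈ Finset.Icc B T, f A.card =
      ∑ e ∈ Finset.Icc B.card T.card, (T.card - B.card).choose (e - B.card) • f e := by
  have hmaps : ∀ A ∈ Finset.Icc B T, A.card ∈ Finset.Icc B.card T.card := fun A hA ↦
    Finset.mem_Icc.2 ((Finset.mem_Icc.1 hA).imp Finset.card_le_card Finset.card_le_card)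
  rw [← Finset.sum_fiberwise_of_maps_to hmaps]
  refine Finset.sum_congr rfl fun e he ↦ ?_
  have hfiber : {A ∈ Finset.Icc B T | A.card = e} = {A ∈ T.powersetCard e | B ⊆ A} := by
    ext A
    simp only [Finset.mem_filter, Finset.mem_Icc, Finset.mem_powersetCard]
    tauto
  rw [Finset.sum_congr rfl fun A hA ↦ congrArg f (Finset.mem_filter.1 hA).2, Finset.sum_const,
    hfiber, Finset.card_filter_powersetCard_subset _ _ _ hBT (Finset.mem_Icc.1 he).1]

variable {n : ℕ} {q : ℕ → ℕ → ℝ≥0∞} {v : Fin n}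

lemma nbhdMeasure_setOf_subset_eq_sum_Icc (B : Finset (Fin n)) :
    nbhdMeasure n q v {A | B ⊆ A} =
      ∑ A ∈ Finset.Icc B (Finset.Iio v), q v A.card / ((v : ℕ).choose A.card : ℝ≥0∞) := by
  classical
  have hIcc : Finset.Icc B (Finset.Iio v) =
      Finset.univ.filter fun A ↦ B ⊆ A ∧ A ⊆ Finset.Iio v := by
    ext A
    simp
  rw [hIcc, Finset.sum_filter, nbhdMeasure, Measure.finsetSum_apply]
  refine Finset.sum_congr rfl fun A _ ↦ ?_
  rw [Measure.smul_apply, Measure.dirac_apply' _ MeasurableSpace.measurableSet_top]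
  simp [Set.indicator_apply, ite_and]

lemma nbhdMeasure_setOf_subset {B : Finset (Fin n)} (hB : B ⊆ Finset.Iio v) :
    nbhdMeasure n q v {A | B ⊆ A} = ∑ e ∈ Finset.range (v + 1),
      q v e * ((e.choose B.card : ℝ≥0∞) / ((v : ℕ).choose B.card : ℝ≥0∞)) := by
  have hBv : B.card ≤ v := Fin.card_Iio v ▸ Finset.card_le_card hB
  rw [nbhdMeasure_setOf_subset_eq_sum_Icc,
    sum_Icc_finset_apply_card hB fun e ↦ q v e / ((v : ℕ).choose e : ℝ≥0∞), Fin.card_Iio]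
  refine Finset.sum_subset_zero_on_sdiff (fun e he ↦ ?_) (fun e he ↦ ?_) fun e he ↦ ?_
  · exact Finset.mem_range_succ_iff.2 (Finset.mem_Icc.1 he).2
  · have : e < B.card := by
      simp only [Finset.mem_sdiff, Finset.mem_range, Finset.mem_Icc] at he
      omega
    simp [Nat.choose_eq_zero_of_lt this]
  · obtain ⟨hBe, hev⟩ := Finset.mem_Icc.1 he
    have hratio : (((v : ℕ) - B.card).choose (e - B.card) : ℝ≥0∞) / ((v : ℕ).choose e : ℝ≥0∞) =
        (e.choose B.card : ℝ≥0∞) / ((v : ℕ).choose B.card : ℝ≥0∞) := by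
      rw [ENNReal.div_eq_div_iff (by simpa using (Nat.choose_pos hBv).ne') (by simp)
        (by simpa using (Nat.choose_pos hev).ne') (by simp)]
      exact_mod_cast (Nat.choose_mul hBe).symm
    rw [← hratio, nsmul_eq_mul, div_eq_mul_inv, div_eq_mul_inv, mul_left_comm]

lemma isProbabilityMeasure_nbhdMeasure (hq : ∑ e ∈ Finset.range (v + 1), q v e = 1) :
    IsProbabilityMeasure (nbhdMeasure n q v) := by
  have hempty := nbhdMeasure_setOf_subset (q := q) (Finset.empty_subset (Finset.Iio v))
  exact ⟨by simpa [hq] using hempty⟩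

lemma nbhdMeasure_real_setOf_subset (hq : ∑ e ∈ Finset.range (v + 1), q v e = 1)
    {B : Finset (Fin n)} (hB : B ⊆ Finset.Iio v) :
    (nbhdMeasure n q v).real {A | B ⊆ A} =
      inclusionProb (fun e ↦ (q v e).toReal) B.card v := by
  have := isProbabilityMeasure_nbhdMeasure hq
  have hne_top := measure_ne_top (nbhdMeasure n q v) {A | B ⊆ A}
  rw [nbhdMeasure_setOf_subset hB] at hne_top
  rw [measureReal_def, nbhdMeasure_setOf_subset hB,
    ENNReal.toReal_sum (ENNReal.sum_ne_top.1 hne_top), inclusionProb]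
  simp only [ENNReal.toReal_mul, ENNReal.toReal_div, ENNReal.toReal_natCast]

end NeighborhoodLaw

section ExpectedHomCount

lemma measureReal_pi_setOf_forall_apply_mem {ι κ : Type*} [Fintype ι] [Fintype κ] {X : κ → Type*}
    [∀ k, MeasurableSpace (X k)] {μ : ∀ k, Measure (X k)} [∀ k, IsProbabilityMeasure (μ k)]
    {φ : ι → κ} (hφ : φ.Injective) {t : ∀ i, Set (X (φ i))} (ht : ∀ i, MeasurableSet (t i)) :
    (Measure.pi μ).real {ω | ∀ i, ω (φ i) ∈ t i} = ∏ i, (μ (φ i)).real (t i) := by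
  have hindep : ProbabilityTheory.iIndepFun (fun i (ω : ∀ k, X k) ↦ ω (φ i)) (Measure.pi μ) :=
    (ProbabilityTheory.iIndepFun_pi (X := fun _ ↦ id) fun _ ↦ aemeasurable_id).precomp hφ
  have hinter := hindep.meas_iInter fun i ↦ ⟨t i, ht i, rfl⟩
  simp only [(measurePreserving_eval μ _).measure_preimage (ht _).nullMeasurableSet] at hinter
  rw [measureReal_def, Set.ofPred_forall]
  exact (congrArg ENNReal.toReal hinter).trans (ENNReal.toReal_prod _ _)

open scoped Classical in
/-- The vertices `i < j` adjacent to `j`, whose number is `indeg F j`. -/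
noncomputable def predNeighborFinset {m : ℕ} (F : SimpleGraph (Fin m)) (j : Fin m) :
    Finset (Fin m) :=
  {i | i < j ∧ F.Adj i j}

variable {m n : ℕ} {F : SimpleGraph (Fin m)} {q : ℕ → ℕ → ℝ≥0∞} {φ : Fin m → Fin n}

lemma card_predNeighborFinset (F : SimpleGraph (Fin m)) (j : Fin m) :
    (predNeighborFinset F j).card = indeg F j := by
  classical
  rw [indeg, Nat.card_eq_fintype_card, Fintype.card_subtype, predNeighborFinset]

lemma forall_adj_graphOf_iff (hφ : StrictMono φ) (ω : Fin n → Finset (Fin n)) :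
    (∀ i j, F.Adj i j → (graphOf ω).Adj (φ i) (φ j)) ↔
      ∀ j, (predNeighborFinset F j).image φ ⊆ ω (φ j) := by
  have hlt {i j} (hij : i < j) : (graphOf ω).Adj (φ i) (φ j) ↔ φ i ∈ ω (φ j) := by
    simp [graphOf, hφ hij, (hφ hij).not_gt]
  simp only [Finset.image_subset_iff, predNeighborFinset, Finset.mem_filter_univ]
  constructor
  · exact fun h j i ⟨hij, hadj⟩ ↦ (hlt hij).1 (h i j hadj)
  · intro h i j hadj
    rcases hadj.ne.lt_or_gt with hij | hji
    · exact (hlt hij).2 (h j i ⟨hij, hadj⟩)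
    · exact ((hlt hji).2 (h i j ⟨hji, hadj.symm⟩)).symm

lemma con1Measure_real_forall_adj (hq : ∀ v, ∑ e ∈ Finset.range (v + 1), q v e = 1)
    (F : SimpleGraph (Fin m)) (hφ : StrictMono φ) :
    (con1Measure n q).real {ω | ∀ i j, F.Adj i j → (graphOf ω).Adj (φ i) (φ j)} =
      ∏ j, inclusionProb (fun e ↦ (q (φ j) e).toReal) (indeg F j) (φ j) := by
  have (v : Fin n) := isProbabilityMeasure_nbhdMeasure (hq v)
  have image_subset_Iio (j : Fin m) :
      (predNeighborFinset F j).image φ ⊆ Finset.Iio (φ j) := by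
    simp only [Finset.image_subset_iff, predNeighborFinset, Finset.mem_filter_univ, Finset.mem_Iio]
    exact fun i hi ↦ hφ hi.1
  simp only [forall_adj_graphOf_iff hφ]
  refine (measureReal_pi_setOf_forall_apply_mem hφ.injective
    (X := fun _ ↦ Finset (Fin n)) (t := fun j ↦ {A | (predNeighborFinset F j).image φ ⊆ A})
    fun _ ↦ (Set.toFinite _).measurableSet).trans (Finset.prod_congr rfl fun j _ ↦ ?_)
  rw [nbhdMeasure_real_setOf_subset (hq _) (image_subset_Iio j),
    Finset.card_image_of_injective _ hφ.injective, card_predNeighborFinset]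

lemma incHomCount_eq_sum_indicator (F : SimpleGraph (Fin m)) (ω : Fin n → Finset (Fin n)) :
    (incHomCount F (graphOf ω) : ℝ) = ∑ φ ∈ incMaps m n,
      Set.indicator {ω | ∀ i j, F.Adj i j → (graphOf ω).Adj (φ i) (φ j)} 1 ω := by
  classical
  rw [incHomCount, Nat.card_eq_fintype_card, Fintype.card_subtype, incMaps]
  simp only [Set.indicator_apply, Set.mem_ofPred_eq, Pi.one_apply]
  rw [Finset.sum_boole, Finset.filter_filter]

lemma integral_incHomCount (hq : ∀ v, ∑ e ∈ Finset.range (v + 1), q v e = 1)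
    (F : SimpleGraph (Fin m)) (n : ℕ) :
    ∫ ω, (incHomCount F (graphOf ω) : ℝ) ∂(con1Measure n q) = ∑ φ ∈ incMaps m n,
      ∏ j, inclusionProb (fun e ↦ (q (φ j) e).toReal) (indeg F j) (φ j) := by
  have (v : Fin n) := isProbabilityMeasure_nbhdMeasure (hq v)
  have : IsProbabilityMeasure (con1Measure n q) := by
    unfold con1Measure
    infer_instance
  have hmeas (s : Set (Fin n → Finset (Fin n))) : MeasurableSet s := s.toFinite.measurableSet
  simp only [incHomCount_eq_sum_indicator]
  rw [integral_finsetSum _ fun φ _ ↦ (integrable_const 1).indicator (hmeas _)]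
  refine Finset.sum_congr rfl fun φ hφ ↦ ?_
  have hφ_mono : StrictMono φ := (Finset.mem_filter_univ φ).1 hφ
  rw [integral_indicator_one (hmeas _), con1Measure_real_forall_adj hq F hφ_mono]

end ExpectedHomCount

/-- Suppose the indegree distributions of Construction 1 satisfy
`D_n/n → ν` in distribution (here `q (n-1)` is the indegree distribution `ν_n` of the
`n`-th vertex, which has `n−1` predecessors). Then for every graph `F` on `{1,…,m}` and
every permutation `σ` of `{1,…,m}`,
`E[n_≤(F_σ, G_n)] / n^m → (1/m!) ∏_j M_{d_j(F_σ)}` where `M_d = ∫₀¹ x^d dν(x)`. -/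
theorem stmt8 (ν : Measure ℝ) [IsProbabilityMeasure ν] (hν : ν (Set.Icc 0 1) = 1)
    (q : ℕ → ℕ → ℝ≥0∞)
    (hq1 : ∀ v : ℕ, ∑ d ∈ Finset.range (v + 1), q v d = 1)
    (hq0 : ∀ v d : ℕ, v < d → q v d = 0)
    (hconv : ∀ f : BoundedContinuousFunction ℝ ℝ,
      Tendsto (fun k => ∑ d ∈ Finset.range k, (q (k - 1) d).toReal * f ((d : ℝ) / k))
        atTop (nhds (∫ x, f x ∂ν)))
    (m : ℕ) (F : SimpleGraph (Fin m)) (σ : Equiv.Perm (Fin m)) :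
    Tendsto
      (fun n => (∫ ω, (incHomCount (relabel σ F) (graphOf ω) : ℝ) ∂(con1Measure n q))
        / (n : ℝ) ^ m)
      atTop
      (nhds ((1 / (Nat.factorial m : ℝ)) *
        ∏ j : Fin m, ∫ x, x ^ (indeg (relabel σ F) j) ∂ν)) := by
  have sum_toReal (v : ℕ) : ∑ e ∈ Finset.range (v + 1), (q v e).toReal = 1 := by
    rw [← ENNReal.toReal_sum (ENNReal.sum_ne_top.1 (by simp [hq1 v])), hq1, ENNReal.toReal_one]
  have inclusionProb_tendsto (j : Fin m) :=
    tendsto_inclusionProb hν (fun _ _ ↦ ENNReal.toReal_nonneg) sum_toReal hconv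
      (indeg (relabel σ F) j)
  have card_tendsto : Tendsto (fun n ↦ ((incMaps m n).card : ℝ) / (n : ℝ) ^ Fintype.card (Fin m))
      atTop (nhds (1 / (m.factorial : ℝ))) := by
    simpa only [card_incMaps, Fintype.card_fin] using tendsto_choose_div_pow m
  simpa only [integral_incHomCount hq1, Fintype.card_fin] using
    tendsto_sum_prod_div_pow card_tendsto inclusionProb_tendsto
end

section
/- Let ν be a probability measure on [0,1], μ_ν = ν × λ on S = [0,1]², and W the kernel on S defined by W((s₁,t₁),(s₂,t₂)) = s₂ if t₁ < t₂, s₁ if t₁ > t₂, 0 if t₁ = t₂. Then for every finite simple graph F with vertex set {1,…,m}, the homomorphism density t(F,W) = ∫_{S^m} ∏_{{i,j}∈E(F)} W(x_i,x_j) dμ_ν(x₁)⋯dμ_ν(x_m) satisfies t(F,W) = (1/m!) Σ_σ ∏_{j=1}^m M_{d_j(F_σ)}, where the sum is over all permutations σ of {1,…,m}, d_j(F_σ) = #{i < j : {i,j} ∈ E(F_σ)}, and M_d = ∫₀¹ x^d dν(x). -/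
open MeasureTheory Filter
open scoped ENNReal

/-- Lebesgue measure on `[0,1]`, as a (probability) measure on `ℝ`. -/
noncomputable def unif01 : Measure ℝ := volume.restrict (Set.Icc (0 : ℝ) 1)

/-- The measure `μ_ν = ν × λ` on `S = [0,1]²`. -/
noncomputable def muNu (ν : Measure ℝ) : Measure (ℝ × ℝ) := ν.prod unif01

/-- The kernel `W` on `S = [0,1]²`:
`W((s₁,t₁),(s₂,t₂)) = s₂` if `t₁ < t₂`, `s₁` if `t₁ > t₂`, and `0` if `t₁ = t₂`. -/
noncomputable def Wker : ℝ × ℝ → ℝ × ℝ → ℝ := fun x y =>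
  if x.2 < y.2 then y.1 else if y.2 < x.2 then x.1 else 0

/-- `∏_{{i,j} ∈ E(F)} W(x_i, x_j)` (each edge counted once, via its ordered
representative `i < j`). -/
noncomputable def edgeProd {m : ℕ} {α : Type*} (F : SimpleGraph (Fin m))
    [DecidableRel F.Adj] (W : α → α → ℝ) (x : Fin m → α) : ℝ :=
  ∏ p ∈ Finset.univ.filter (fun p : Fin m × Fin m => p.1 < p.2 ∧ F.Adj p.1 p.2),
    W (x p.1) (x p.2)

/-!
Sorting the sample points `(s_i, t_i)` by their heights `t_i` splits `S^m`, up to the null set of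
ties, into `m!` congruent chambers. On the chamber where the `σ i`-th lowest point is `(s_i, t_i)`,
the integrand is the edge product of `F_σ` at the sorted points. There `W` returns the first
coordinate of the higher endpoint, so this product is `∏_j s_j ^ d_j(F_σ)` in the sorted
coordinates. It does not depend on the heights, which contribute only the volume `1/m!` of the
chamber.
-/

section Permutation

variable {ι α : Type*} [MeasurableSpace α]

theorem measurableEmbedding_comp_perm (σ : Equiv.Perm ι) :
    MeasurableEmbedding fun x : ι → α => x ∘ σ :=
  (MeasurableEquiv.arrowCongr' σ.symm (.refl α)).measurableEmbedding

theorem measurePreserving_pi_comp_perm [Fintype ι] (μ : Measure α) [SigmaFinite μ]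
    (σ : Equiv.Perm ι) :
    MeasurePreserving (fun x : ι → α => x ∘ σ) (Measure.pi fun _ => μ) (Measure.pi fun _ => μ) :=
  measurePreserving_arrowCongr' _ _ σ.symm (.refl α) fun _ => .id μ

end Permutation

section Chamber

variable {m : ℕ} {α β : Type*} [LinearOrder β] {h : α → β}

/-- The chamber of a height function `h`: the `m`-tuples along which `h` is strictly increasing. Its
images under permutation of the coordinates cover the tuples with pairwise distinct heights. -/
def chamber (m : ℕ) (h : α → β) : Set (Fin m → α) := {x | StrictMono (h ∘ x)}

theorem strictMono_comp_perm_iff_eq_sort {t : Fin m → β} (ht : t.Injective)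
    {σ : Equiv.Perm (Fin m)} : StrictMono (t ∘ σ) ↔ σ = Tuple.sort t := by
  constructor
  · intro hσ
    have hcomp : t ∘ σ = t ∘ Tuple.sort t :=
      Tuple.unique_monotone hσ.monotone (Tuple.monotone_sort t)
    exact Equiv.ext fun i => ht (congrFun hcomp i)
  · rintro rfl
    exact (Tuple.monotone_sort t).strictMono_of_injective (ht.comp (Equiv.injective _))

theorem pairwise_disjoint_preimage_chamber :
    Pairwise (Function.onFun Disjoint
      fun σ : Equiv.Perm (Fin m) => (fun x : Fin m → α => x ∘ σ) ⁻¹' chamber m h) := by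
  refine fun σ τ hne => Set.disjoint_left.2 fun x hσ hτ => hne ?_
  replace hσ : StrictMono ((h ∘ x) ∘ σ) := hσ
  have hinj : (h ∘ x).Injective := (σ.injective_comp _).1 hσ.injective
  exact ((strictMono_comp_perm_iff_eq_sort hinj).1 hσ).trans
    ((strictMono_comp_perm_iff_eq_sort hinj).1 hτ).symm

theorem iUnion_preimage_chamber :
    ⋃ σ : Equiv.Perm (Fin m), (fun x : Fin m → α => x ∘ σ) ⁻¹' chamber m h =
      {x | (h ∘ x).Injective} := by
  ext x
  simp only [Set.mem_iUnion, Set.mem_preimage, Set.mem_ofPred_eq]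
  constructor
  · rintro ⟨σ, hσ⟩
    exact (σ.injective_comp _).1 (StrictMono.injective hσ)
  · exact fun hinj => ⟨Tuple.sort (h ∘ x), (strictMono_comp_perm_iff_eq_sort hinj).2 rfl⟩

theorem setIntegral_chamber_snd {γ E : Type*} [MeasurableSpace γ] [MeasurableSpace β]
    [NormedAddCommGroup E] [NormedSpace ℝ E] {μ : Measure γ} [SigmaFinite μ]
    {ρ : Measure β} [SigmaFinite ρ] (f : (Fin m → γ) → E) :
    ∫ x in chamber m Prod.snd, f (fun i => (x i).1) ∂Measure.pi (fun _ => μ.prod ρ) =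
      (Measure.pi fun _ => ρ).real (chamber m id) • ∫ s, f s ∂Measure.pi fun _ => μ := by
  have hsplit := measurePreserving_arrowProdEquivProdArrow γ β (Fin m) (fun _ => μ) fun _ => ρ
  calc ∫ x in chamber m Prod.snd, f (fun i => (x i).1) ∂Measure.pi (fun _ => μ.prod ρ)
      = ∫ z in Set.univ ×ˢ chamber m id, f z.1
          ∂(Measure.pi fun _ => μ).prod (Measure.pi fun _ => ρ) := by
        rw [← hsplit.setIntegral_preimage_emb (MeasurableEquiv.measurableEmbedding _),
          Set.univ_prod]
        rfl
    _ = (Measure.pi fun _ => ρ).real (chamber m id) • ∫ s, f s ∂Measure.pi fun _ => μ := by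
        rw [← Measure.prod_restrict, Measure.restrict_univ, integral_fun_fst,
          measureReal_restrict_apply_univ]

variable [MeasurableSpace α] [MeasurableSpace β] [TopologicalSpace β] [OrderClosedTopology β]
  [SecondCountableTopology β] [OpensMeasurableSpace β]

theorem measurableSet_chamber (hh : Measurable h) : MeasurableSet (chamber m h) := by
  simp only [chamber, StrictMono, Set.ofPred_forall, Function.comp_apply]
  refine .iInter fun i => .iInter fun j => .iInter fun _ => measurableSet_lt ?_ ?_ <;> fun_prop

theorem ae_pi_ne_of_null_fibers {μ : Measure α} [SigmaFinite μ] (hh : Measurable h)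
    (hμ : ∀ b, μ (h ⁻¹' {b}) = 0) {i j : Fin m} (hij : i ≠ j) :
    ∀ᵐ x ∂Measure.pi fun _ : Fin m => μ, h (x i) ≠ h (x j) := by
  obtain _ | n := m
  · exact i.elim0
  obtain ⟨k, rfl⟩ := Fin.exists_succAbove_eq hij.symm
  have hfiber (a : α) : ∀ᵐ y ∂Measure.pi fun _ : Fin n => μ, h a ≠ h (y k) := by
    have hnull : ∀ᵐ b ∂μ, h a ≠ h b := by
      simpa [ae_iff, Set.preimage, eq_comm] using hμ (h a)
    exact (Measure.quasiMeasurePreserving_eval (μ := fun _ : Fin n => μ) k).ae hnull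
  have hmeas : MeasurableSet {z : α × (Fin n → α) | h z.1 ≠ h (z.2 k)} :=
    (measurableSet_eq_fun (by fun_prop) (by fun_prop)).compl
  exact (measurePreserving_piFinSuccAbove (fun _ => μ) i).quasiMeasurePreserving.ae
    ((Measure.ae_prod_iff_ae_ae hmeas).2 (.of_forall hfiber))

theorem ae_pi_injective_comp {μ : Measure α} [SigmaFinite μ] (hh : Measurable h)
    (hμ : ∀ b, μ (h ⁻¹' {b}) = 0) :
    ∀ᵐ x ∂Measure.pi fun _ : Fin m => μ, (h ∘ x).Injective := by
  have hne : ∀ᵐ x ∂Measure.pi fun _ : Fin m => μ, ∀ i j, i ≠ j → h (x i) ≠ h (x j) := by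
    simp only [ae_all_iff]
    exact fun i j => ae_pi_ne_of_null_fibers hh hμ
  filter_upwards [hne] with x hx i j
  exact not_imp_not.1 (hx i j)

theorem integral_pi_eq_sum_setIntegral_chamber {E : Type*} [NormedAddCommGroup E]
    [NormedSpace ℝ E] {μ : Measure α} [SigmaFinite μ] (hh : Measurable h)
    (hμ : ∀ b, μ (h ⁻¹' {b}) = 0) {f : (Fin m → α) → E}
    (hf : ∀ σ : Equiv.Perm (Fin m),
      IntegrableOn (fun x => f (x ∘ σ)) (chamber m h) (Measure.pi fun _ => μ)) :
    ∫ x, f x ∂Measure.pi (fun _ => μ) =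
      ∑ σ : Equiv.Perm (Fin m), ∫ x in chamber m h, f (x ∘ σ) ∂Measure.pi fun _ => μ := by
  let tile (σ : Equiv.Perm (Fin m)) : Set (Fin m → α) := (fun x => x ∘ σ) ⁻¹' chamber m h
  have hpres (σ : Equiv.Perm (Fin m)) := measurePreserving_pi_comp_perm μ σ
  have hemb (σ : Equiv.Perm (Fin m)) := measurableEmbedding_comp_perm (α := α) σ
  have hinv (σ : Equiv.Perm (Fin m)) (x : Fin m → α) : (x ∘ σ) ∘ σ.symm = x :=
    funext fun i => congrArg x (σ.apply_symm_apply i)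
  have hintegrable (σ) : IntegrableOn f (tile σ) (Measure.pi fun _ => μ) := by
    have hcomp : (fun x => f (x ∘ σ.symm)) ∘ (fun x => x ∘ σ) = f :=
      funext fun x => congrArg f (hinv σ x)
    exact hcomp ▸ ((hpres σ).integrableOn_comp_preimage (hemb σ)).2 (hf σ.symm)
  have hcover : (⋃ σ, tile σ) =ᵐ[Measure.pi fun _ => μ] Set.univ :=
    eventuallyEq_univ.2 <|
      (iUnion_preimage_chamber (h := h)).symm ▸ ae_pi_injective_comp hh hμ
  calc ∫ x, f x ∂Measure.pi (fun _ => μ)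
      = ∫ x in ⋃ σ, tile σ, f x ∂Measure.pi (fun _ => μ) := by
        rw [setIntegral_congr_set hcover, setIntegral_univ]
    _ = ∑ σ, ∫ x in tile σ, f x ∂Measure.pi (fun _ => μ) :=
        integral_iUnion_fintype (fun σ => (hpres σ).measurable (measurableSet_chamber hh))
          pairwise_disjoint_preimage_chamber hintegrable
    _ = ∑ σ : Equiv.Perm (Fin m), ∫ x in chamber m h, f (x ∘ σ.symm) ∂Measure.pi fun _ => μ := by
        refine Finset.sum_congr rfl fun σ _ => ?_
        simpa only [hinv] using (hpres σ).setIntegral_preimage_emb (hemb σ)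
          (fun x => f (x ∘ σ.symm)) (chamber m h)
    _ = ∑ σ : Equiv.Perm (Fin m), ∫ x in chamber m h, f (x ∘ σ) ∂Measure.pi fun _ => μ :=
        Equiv.sum_comp (Equiv.inv (Equiv.Perm (Fin m)))
          fun σ => ∫ x in chamber m h, f (x ∘ σ) ∂Measure.pi fun _ => μ

theorem measureReal_pi_chamber {μ : Measure α} [IsFiniteMeasure μ] (hh : Measurable h)
    (hμ : ∀ b, μ (h ⁻¹' {b}) = 0) :
    (Measure.pi fun _ => μ).real (chamber m h) = μ.real Set.univ ^ m / m.factorial := by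
  have hsum := integral_pi_eq_sum_setIntegral_chamber (m := m) (f := fun _ => (1 : ℝ))
    hh hμ fun _ => integrable_const 1
  have huniv : (Measure.pi fun _ : Fin m => μ).real Set.univ = μ.real Set.univ ^ m := by
    simp [measureReal_def, Measure.pi_univ]
  rw [eq_div_iff (by positivity)]
  simpa [huniv, Fintype.card_perm, mul_comm] using hsum.symm

end Chamber

section Graph

variable {m : ℕ} {α : Type*} (F : SimpleGraph (Fin m)) [DecidableRel F.Adj]

instance relabel.instDecidableRelAdj (σ : Equiv.Perm (Fin m)) : DecidableRel (relabel σ F).Adj :=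
  fun i j => inferInstanceAs (Decidable (F.Adj (σ.symm i) (σ.symm j)))

theorem edgeFinset_relabel (σ : Equiv.Perm (Fin m)) :
    (relabel σ F).edgeFinset = F.edgeFinset.map σ.toEmbedding.sym2Map := by
  have hmap : relabel σ F = F.map σ.toEmbedding := (F.map_symm σ.symm).symm
  rw [← Finset.coe_inj, Finset.coe_map, SimpleGraph.coe_edgeFinset, SimpleGraph.coe_edgeFinset,
    hmap, SimpleGraph.edgeSet_map]

theorem edgeProd_eq_prod_edgeFinset {W : α → α → ℝ} (hW : ∀ a b, W a b = W b a)
    (x : Fin m → α) :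
    edgeProd F W x =
      ∏ e ∈ F.edgeFinset, Sym2.lift ⟨fun i j => W (x i) (x j), fun _ _ => hW _ _⟩ e := by
  unfold edgeProd
  refine Finset.prod_nbij' (fun p => s(p.1, p.2)) (fun e => (e.inf, e.sup)) ?_ ?_ ?_ ?_ ?_
  · simp +contextual
  · intro e
    induction e with | _ i j
    intro hadj
    have hadj : F.Adj i j := by simpa using hadj
    rcases lt_or_gt_of_ne hadj.ne with hlt | hlt <;> simp [hlt.le, hlt, hadj, hadj.symm]
  · simp +contextual [le_of_lt]
  · intro e
    induction e with | _ i j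
    rcases le_total i j with hle | hle <;> simp [hle, Sym2.eq_swap]
  · simp

theorem edgeProd_relabel {W : α → α → ℝ} (hW : ∀ a b, W a b = W b a)
    (σ : Equiv.Perm (Fin m)) (x : Fin m → α) :
    edgeProd (relabel σ F) W x = edgeProd F W (x ∘ σ) := by
  rw [edgeProd_eq_prod_edgeFinset _ hW, edgeProd_eq_prod_edgeFinset _ hW, edgeFinset_relabel,
    Finset.prod_map]
  refine Finset.prod_congr rfl fun e _ => ?_
  induction e with | _ i j
  rfl

theorem indeg_eq_card_filter (j : Fin m) :
    indeg F j = (Finset.univ.filter fun i => i < j ∧ F.Adj i j).card := by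
  rw [indeg, Nat.card_eq_fintype_card, Fintype.card_subtype]

theorem indeg_le_degree (j : Fin m) : indeg F j ≤ F.degree j := by
  rw [indeg_eq_card_filter, ← F.card_neighborFinset_eq_degree]
  refine Finset.card_le_card fun i hi => ?_
  simpa using (Finset.mem_filter.1 hi).2.2.symm

theorem indeg_relabel_le_maxDegree (σ : Equiv.Perm (Fin m)) (j : Fin m) :
    indeg (relabel σ F) j ≤ F.maxDegree := by
  have hiso : relabel σ F ≃g F := ⟨σ.symm, Iff.rfl⟩
  rw [← hiso.maxDegree_eq]
  exact (indeg_le_degree _ j).trans (SimpleGraph.degree_le_maxDegree _ j)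

theorem edgeProd_eq_prod_prod (W : α → α → ℝ) (x : Fin m → α) :
    edgeProd F W x =
      ∏ j, ∏ i ∈ Finset.univ.filter (fun i => i < j ∧ F.Adj i j), W (x i) (x j) := by
  simp_rw [edgeProd, Finset.prod_filter, ← Finset.univ_product_univ, Finset.prod_product_right]

theorem Wker_comm (x y : ℝ × ℝ) : Wker x y = Wker y x := by
  unfold Wker
  split_ifs with hxy hyx <;> first | rfl | exact absurd hxy hyx.asymm

theorem edgeProd_Wker_of_mem_chamber {x : Fin m → ℝ × ℝ} (hx : x ∈ chamber m Prod.snd) :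
    edgeProd F Wker x = ∏ j, (x j).1 ^ indeg F j := by
  rw [edgeProd_eq_prod_prod]
  refine Finset.prod_congr rfl fun j _ => ?_
  rw [indeg_eq_card_filter, ← Finset.prod_const]
  exact Finset.prod_congr rfl fun i hi => if_pos (hx (Finset.mem_filter.1 hi).2.1)

theorem edgeProd_Wker_comp_of_mem_chamber (σ : Equiv.Perm (Fin m)) {x : Fin m → ℝ × ℝ}
    (hx : x ∈ chamber m Prod.snd) :
    edgeProd F Wker (x ∘ σ) = ∏ j, (x j).1 ^ indeg (relabel σ F) j := by
  rw [← edgeProd_relabel F Wker_comm, edgeProd_Wker_of_mem_chamber _ hx]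

end Graph

section Moments

variable {m : ℕ} {ν ρ : Measure ℝ}

theorem integrable_pow_of_ae_mem_Icc [IsFiniteMeasure ν] {a b : ℝ}
    (hν : ∀ᵐ s ∂ν, s ∈ Set.Icc a b) (d : ℕ) : Integrable (fun s => s ^ d) ν := by
  refine .of_bound (by fun_prop) (max |a| |b| ^ d) (hν.mono fun s hs => ?_)
  rw [norm_pow]
  exact pow_le_pow_left₀ (norm_nonneg s) (abs_le_max_abs_abs hs.1 hs.2) d

theorem integrable_pow_of_le [IsFiniteMeasure ν] {p q : ℕ} (hpq : p ≤ q)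
    (hq : Integrable (fun s => s ^ q) ν) : Integrable (fun s => s ^ p) ν := by
  have hnorm : Integrable (fun s => ‖id s‖ ^ p) ν :=
    integrable_norm_pow_of_le (by fun_prop) hpq (by simpa using hq.norm)
  exact (integrable_norm_iff (by fun_prop)).1 (by simpa using hnorm)

theorem setIntegral_chamber_prod_pow [SigmaFinite ν] [IsProbabilityMeasure ρ]
    [NullSingletonClass ρ] (d : Fin m → ℕ) :
    ∫ x in chamber m Prod.snd, ∏ j, (x j).1 ^ d j ∂Measure.pi (fun _ => ν.prod ρ) =
      1 / m.factorial * ∏ j, ∫ s, s ^ d j ∂ν := by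
  rw [setIntegral_chamber_snd (fun s : Fin m → ℝ => ∏ j, s j ^ d j),
    measureReal_pi_chamber measurable_id measure_singleton,
    integral_fintype_prod_eq_prod fun j s => s ^ d j]
  simp

theorem integrable_pi_prod_fst_pow [SigmaFinite ν] [IsFiniteMeasure ρ] {d : Fin m → ℕ}
    (hd : ∀ j, Integrable (fun s => s ^ d j) ν) :
    Integrable (fun x : Fin m → ℝ × ℝ => ∏ j, (x j).1 ^ d j) (Measure.pi fun _ => ν.prod ρ) :=
  .fintype_prod (f := fun j (z : ℝ × ℝ) => z.1 ^ d j) fun j => (hd j).comp_fst ρ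

end Moments

instance : IsProbabilityMeasure unif01 := ⟨by simp [unif01]⟩

instance : NullSingletonClass unif01 := inferInstanceAs (NullSingletonClass (volume.restrict _))

theorem stmt10_general (ν ρ : Measure ℝ) [IsFiniteMeasure ν] [IsProbabilityMeasure ρ]
    [NullSingletonClass ρ] (m : ℕ) (F : SimpleGraph (Fin m)) [DecidableRel F.Adj]
    (hν : Integrable (fun s => s ^ F.maxDegree) ν) :
    ∫ x : Fin m → ℝ × ℝ, edgeProd F Wker x ∂(Measure.pi fun _ : Fin m => ν.prod ρ)
      = (1 / (Nat.factorial m : ℝ)) *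
          ∑ σ : Equiv.Perm (Fin m), ∏ j : Fin m, ∫ t, t ^ (indeg (relabel σ F) j) ∂ν := by
  have hmeas : MeasurableSet (chamber m (Prod.snd : ℝ × ℝ → ℝ)) :=
    measurableSet_chamber measurable_snd
  have hfiber (b : ℝ) : (ν.prod ρ) (Prod.snd ⁻¹' {b}) = 0 := by
    rw [← Set.univ_prod, Measure.prod_prod, measure_singleton, mul_zero]
  have hchamber (σ : Equiv.Perm (Fin m)) :
      Set.EqOn (fun x : Fin m → ℝ × ℝ => edgeProd F Wker (x ∘ σ))
        (fun x => ∏ j, (x j).1 ^ indeg (relabel σ F) j) (chamber m Prod.snd) :=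
    fun _ hx => edgeProd_Wker_comp_of_mem_chamber F σ hx
  have hintegrable (σ : Equiv.Perm (Fin m)) := (integrable_pi_prod_fst_pow (ρ := ρ) fun j =>
    integrable_pow_of_le (indeg_relabel_le_maxDegree F σ j) hν).integrableOn.congr_fun
      (hchamber σ).symm hmeas
  rw [integral_pi_eq_sum_setIntegral_chamber measurable_snd hfiber hintegrable, Finset.mul_sum]
  refine Finset.sum_congr rfl fun σ _ => ?_
  rw [setIntegral_congr_fun hmeas (hchamber σ), setIntegral_chamber_prod_pow]

/-- For every finite simple graph `F` on `{1,…,m}`, the homomorphism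
density of `F` in the kernel `W` on `(S, μ_ν)` equals
`(1/m!) Σ_σ ∏_{j=1}^m M_{d_j(F_σ)}`, with `M_d = ∫₀¹ x^d dν(x)`. -/
theorem stmt10 (ν : Measure ℝ) [IsProbabilityMeasure ν] (hν : ν (Set.Icc 0 1) = 1)
    (m : ℕ) (F : SimpleGraph (Fin m)) [DecidableRel F.Adj] :
    ∫ x : Fin m → ℝ × ℝ, edgeProd F Wker x ∂(Measure.pi fun _ : Fin m => muNu ν)
      = (1 / (Nat.factorial m : ℝ)) *
          ∑ σ : Equiv.Perm (Fin m), ∏ j : Fin m, ∫ t, t ^ (indeg (relabel σ F) j) ∂ν := by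
  have hmem : ∀ᵐ s ∂ν, s ∈ Set.Icc 0 1 := (mem_ae_iff_prob_eq_one measurableSet_Icc).2 hν
  exact stmt10_general ν unif01 m F (integrable_pow_of_ae_mem_Icc hmem _)
end
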